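/- Rigidity of right-angled Artin groups (Droms): For finite simple graphs Γ and Δ, the right-angled Artin groups A(Γ) and A(Δ) are isomorphic as groups if and only if Γ and Δ are isomorphic as graphs. -/

import Mathlib

/-- The relators of the right-angled Artin group on a simple graph `Γ`:
one commutator for each edge. -/
def raagRels {V : Type*} (Γ : SimpleGraph V) : Set (FreeGroup V) :=
  {r | ∃ u v : V, Γ.Adj u v ∧
    r = FreeGroup.of u * FreeGroup.of v * (FreeGroup.of u)⁻¹ * (FreeGroup.of v)⁻¹}

namespace RAAG

section Presentation

variable {V W G : Type*} [Group G] {Γ : SimpleGraph V} {Δ : SimpleGraph W}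

theorem lift_eq_one {f : V → G} (hf : ∀ u v, Γ.Adj u v → Commute (f u) (f v)) :
    ∀ r ∈ raagRels Γ, FreeGroup.lift f r = 1 := by
  rintro _ ⟨u, v, huv, rfl⟩
  simp only [map_mul, map_inv, FreeGroup.lift_apply_of]
  rw [(hf u v huv).eq]
  group

/-- The homomorphism out of a right-angled Artin group determined by images of the vertices which
commute whenever the vertices are adjacent. -/
def lift (f : V → G) (hf : ∀ u v, Γ.Adj u v → Commute (f u) (f v)) :
    PresentedGroup (raagRels Γ) →* G :=
  PresentedGroup.toGroup (lift_eq_one hf)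

@[simp]
theorem lift_of (f : V → G) (hf : ∀ u v, Γ.Adj u v → Commute (f u) (f v)) (v : V) :
    lift f hf (PresentedGroup.of v) = f v :=
  PresentedGroup.toGroup.of (lift_eq_one hf)

theorem commute_of_adj {u v : V} (h : Γ.Adj u v) :
    Commute (PresentedGroup.of u : PresentedGroup (raagRels Γ)) (PresentedGroup.of v) := by
  have h1 : PresentedGroup.mk (raagRels Γ)
      (FreeGroup.of u * FreeGroup.of v * (FreeGroup.of u)⁻¹ * (FreeGroup.of v)⁻¹) = 1 :=
    PresentedGroup.one_of_mem ⟨u, v, h, rfl⟩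
  simp only [map_mul, map_inv] at h1
  exact mul_inv_eq_iff_eq_mul.mp (mul_inv_eq_one.mp h1)

/-- Isomorphic graphs have isomorphic right-angled Artin groups. -/
def congr (e : Γ ≃g Δ) : PresentedGroup (raagRels Γ) ≃* PresentedGroup (raagRels Δ) :=
  MonoidHom.toMulEquiv
    (lift (fun v => PresentedGroup.of (e v)) fun _ _ h => commute_of_adj (e.map_adj_iff.mpr h))
    (lift (fun w => PresentedGroup.of (e.symm w))
      fun _ _ h => commute_of_adj (e.symm.map_adj_iff.mpr h))
    (PresentedGroup.ext fun v => by simp)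
    (PresentedGroup.ext fun w => by simp)

end Presentation

/-- The Heisenberg group over a commutative ring. -/
@[ext]
structure Heisenberg (R : Type*) where
  /-- The first coordinate of the abelianization. -/
  fst : R
  /-- The second coordinate of the abelianization. -/
  snd : R
  /-- The central coordinate. -/
  central : R

namespace Heisenberg

variable {R : Type*} [CommRing R]

instance : Mul (Heisenberg R) :=
  ⟨fun x y => ⟨x.fst + y.fst, x.snd + y.snd, x.central + y.central + x.fst * y.snd⟩⟩

instance : One (Heisenberg R) := ⟨⟨0, 0, 0⟩⟩

instance : Inv (Heisenberg R) := ⟨fun x => ⟨-x.fst, -x.snd, -x.central + x.fst * x.snd⟩⟩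

@[simp] theorem mul_fst (x y : Heisenberg R) : (x * y).fst = x.fst + y.fst := rfl
@[simp] theorem mul_snd (x y : Heisenberg R) : (x * y).snd = x.snd + y.snd := rfl
@[simp] theorem mul_central (x y : Heisenberg R) :
    (x * y).central = x.central + y.central + x.fst * y.snd := rfl
@[simp] theorem one_fst : (1 : Heisenberg R).fst = 0 := rfl
@[simp] theorem one_snd : (1 : Heisenberg R).snd = 0 := rfl
@[simp] theorem one_central : (1 : Heisenberg R).central = 0 := rfl
@[simp] theorem inv_fst (x : Heisenberg R) : (x⁻¹).fst = -x.fst := rfl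
@[simp] theorem inv_snd (x : Heisenberg R) : (x⁻¹).snd = -x.snd := rfl
@[simp] theorem inv_central (x : Heisenberg R) :
    (x⁻¹).central = -x.central + x.fst * x.snd := rfl

instance : Group (Heisenberg R) :=
  Group.ofLeftAxioms
    (fun x y z => by ext <;> simp <;> ring)
    (fun x => by ext <;> simp)
    (fun x => by ext <;> simp)

/-- The first coordinate, as a homomorphism. -/
def fstHom : Heisenberg R →* Multiplicative R where
  toFun x := Multiplicative.ofAdd x.fst
  map_one' := rfl
  map_mul' _ _ := rfl

/-- The second coordinate, as a homomorphism. -/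
def sndHom : Heisenberg R →* Multiplicative R where
  toFun x := Multiplicative.ofAdd x.snd
  map_one' := rfl
  map_mul' _ _ := rfl

end Heisenberg

section Cup

variable {V W F : Type*} [Field F] (Γ : SimpleGraph V) (Δ : SimpleGraph W)

/-- Two degree one classes of a right-angled Artin group, given by their values on the vertices,
have zero cup product. -/
def CupZero (α β : V → F) : Prop :=
  ∀ u v, Γ.Adj u v → α u * β v = α v * β u

variable {Γ Δ}

theorem CupZero.symm {α β : V → F} (h : CupZero Γ α β) : CupZero Γ β α := fun u v huv => by
  linear_combination -h u v huv

/-- The homomorphism to the additive group of `F` with prescribed values on the vertices. -/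
def character (Γ : SimpleGraph V) (α : V → F) :
    PresentedGroup (raagRels Γ) →* Multiplicative F :=
  lift (fun v => Multiplicative.ofAdd (α v)) fun _ _ _ => Commute.all _ _

@[simp]
theorem character_of (α : V → F) (v : V) :
    character Γ α (PresentedGroup.of v) = Multiplicative.ofAdd (α v) :=
  lift_of _ _ v

/-- The cup product of two classes vanishes iff the corresponding bilinear cocycle is a
coboundary. -/
theorem cupZero_iff_exists_cochain (α β : V → F) :
    CupZero Γ α β ↔ ∃ h : PresentedGroup (raagRels Γ) → F, ∀ x y,
      h (x * y) = h x + h y + (character Γ α x).toAdd * (character Γ β y).toAdd := by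
  constructor
  · intro hαβ
    let ψ : PresentedGroup (raagRels Γ) →* Heisenberg F :=
      lift (fun v => ⟨α v, β v, 0⟩) fun u v huv => by
        have := hαβ u v huv
        ext <;> simp [add_comm, this]
    have hψ : ∀ v, ψ (PresentedGroup.of v) = ⟨α v, β v, 0⟩ := fun v => lift_of _ _ v
    have h1 : Heisenberg.fstHom.comp ψ = character Γ α :=
      PresentedGroup.ext fun v => by simp [hψ, Heisenberg.fstHom]
    have h2 : Heisenberg.sndHom.comp ψ = character Γ β :=
      PresentedGroup.ext fun v => by simp [hψ, Heisenberg.sndHom]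
    refine ⟨fun x => (ψ x).central, fun x y => ?_⟩
    simp only [← h1, ← h2, map_mul]
    rfl
  · rintro ⟨h, hh⟩ u v huv
    have h1 := hh (PresentedGroup.of u) (PresentedGroup.of v)
    have h2 := hh (PresentedGroup.of v) (PresentedGroup.of u)
    rw [(commute_of_adj huv).eq, h2] at h1
    simp only [character_of, toAdd_ofAdd] at h1
    linear_combination -h1

/-- Pullback of degree one classes along a homomorphism of right-angled Artin groups. -/
def pullback (f : PresentedGroup (raagRels Δ) →* PresentedGroup (raagRels Γ)) :
    (V → F) →ₗ[F] (W → F) where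
  toFun α w := (character Γ α (f (PresentedGroup.of w))).toAdd
  map_add' α β := by
    have : character Γ (α + β) = character Γ α * character Γ β :=
      PresentedGroup.ext fun v => by simp
    ext w
    simp [this]
  map_smul' c α := by
    have : character Γ (c • α) =
        (AddMonoidHom.toMultiplicative (AddMonoidHom.mulLeft c)).comp (character Γ α) :=
      PresentedGroup.ext fun v => by simp
    ext w
    simp [this]

theorem character_pullback (f : PresentedGroup (raagRels Δ) →* PresentedGroup (raagRels Γ))
    (α : V → F) : character Δ (pullback f α) = (character Γ α).comp f :=
  PresentedGroup.ext fun w => by simp [pullback]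

theorem CupZero.pullback {α β : V → F} (h : CupZero Γ α β)
    (f : PresentedGroup (raagRels Δ) →* PresentedGroup (raagRels Γ)) :
    CupZero Δ (pullback f α) (RAAG.pullback f β) := by
  rw [cupZero_iff_exists_cochain] at h ⊢
  obtain ⟨k, hk⟩ := h
  refine ⟨fun x => k (f x), fun x y => ?_⟩
  simp [character_pullback, hk]

theorem pullback_pullback (f : PresentedGroup (raagRels Δ) →* PresentedGroup (raagRels Γ))
    (g : PresentedGroup (raagRels Γ) →* PresentedGroup (raagRels Δ))
    (hfg : ∀ x, f (g x) = x) (α : V → F) : pullback g (pullback f α) = α := by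
  ext v
  change (character Δ (pullback f α) (g (PresentedGroup.of v))).toAdd = α v
  simp [character_pullback, hfg]

variable (F) in
/-- The linear equivalence between degree one classes induced by an isomorphism. -/
def pullbackEquiv (e : PresentedGroup (raagRels Γ) ≃* PresentedGroup (raagRels Δ)) :
    (V → F) ≃ₗ[F] (W → F) where
  __ := pullback e.symm.toMonoidHom
  invFun := pullback e.toMonoidHom
  left_inv := pullback_pullback _ _ fun x => by simp
  right_inv := pullback_pullback _ _ fun x => by simp

theorem cupZero_pullbackEquiv_iff
    (e : PresentedGroup (raagRels Γ) ≃* PresentedGroup (raagRels Δ)) (α β : V → F) :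
    CupZero Δ (pullbackEquiv F e α) (pullbackEquiv F e β) ↔ CupZero Γ α β := by
  refine ⟨fun h => ?_, fun h => h.pullback _⟩
  have := h.pullback (Δ := Γ) e.toMonoidHom
  rwa [← (pullbackEquiv F e).symm_apply_apply α, ← (pullbackEquiv F e).symm_apply_apply β]

end Cup

section LinearRigidity

open Module

variable {V W F : Type*} [Field F] {Γ : SimpleGraph V} {Δ : SimpleGraph W}

/-- The subspace of classes whose cup product with `α` vanishes. -/
def annihilator (Γ : SimpleGraph V) (α : V → F) : Submodule F (V → F) where
  carrier := {β | CupZero Γ α β}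
  zero_mem' u v _ := by simp
  add_mem' hβ hγ u v huv := by
    simp only [Pi.add_apply, mul_add, hβ u v huv, hγ u v huv]
  smul_mem' c β hβ u v huv := by
    have := hβ u v huv
    simp only [Pi.smul_apply, smul_eq_mul]
    linear_combination c * this

@[simp]
theorem mem_annihilator {α β : V → F} : β ∈ annihilator Γ α ↔ CupZero Γ α β := Iff.rfl

/-- Restriction of the classes in `annihilator Γ α` to the vertices not adjacent to `s`. -/
def restrict (Γ : SimpleGraph V) (α : V → F) (s : V) :
    annihilator Γ α →ₗ[F] ({x // ¬ Γ.Adj s x} → F) :=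
  (LinearMap.funLeft F F Subtype.val).domRestrict (annihilator Γ α)

theorem restrict_apply (α : V → F) (s : V) (β : annihilator Γ α) (x : {x // ¬ Γ.Adj s x}) :
    restrict Γ α s β x = (β : V → F) x := rfl

theorem restrict_injective {α : V → F} {s : V} (hs : α s ≠ 0) :
    Function.Injective (restrict Γ α s) := by
  rw [← LinearMap.ker_eq_bot, LinearMap.ker_eq_bot']
  rintro ⟨β, hβ⟩ h
  have h0 : ∀ x, ¬ Γ.Adj s x → β x = 0 := fun x hx => congrFun h ⟨x, hx⟩
  ext x
  by_cases hx : Γ.Adj s x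
  · have := hβ s x hx
    rw [h0 s (Γ.loopless.irrefl s), mul_zero] at this
    exact (mul_eq_zero.mp this).resolve_left hs
  · exact h0 x hx

theorem cupZero_single_iff [DecidableEq V] (s : V) (β : V → F) :
    CupZero Γ (Pi.single s 1) β ↔ ∀ x, Γ.Adj s x → β x = 0 := by
  constructor
  · intro h x hx
    simpa [Pi.single_eq_of_ne hx.ne'] using h s x hx
  · intro h u v huv
    by_cases hu : u = s
    · subst hu
      simp [h v huv, Pi.single_eq_of_ne huv.ne']
    · by_cases hv : v = s
      · subst hv
        simp [h u huv.symm, Pi.single_eq_of_ne hu]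
      · simp [Pi.single_eq_of_ne hu, Pi.single_eq_of_ne hv]

variable {φ : (V → F) ≃ₗ[F] (W → F)}

theorem finrank_annihilator_map (hφ : ∀ α β, CupZero Δ (φ α) (φ β) ↔ CupZero Γ α β) (α : V → F) :
    finrank F (annihilator Δ (φ α)) = finrank F (annihilator Γ α) := by
  have : annihilator Δ (φ α) = (annihilator Γ α).map (φ : (V → F) →ₗ[F] (W → F)) := by
    ext β
    obtain ⟨β, rfl⟩ := φ.surjective β
    simp [hφ]
  rw [this]
  exact LinearEquiv.finrank_map_eq φ _

theorem cupZero_symm_iff (hφ : ∀ α β, CupZero Δ (φ α) (φ β) ↔ CupZero Γ α β) (α β : W → F) :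
    CupZero Γ (φ.symm α) (φ.symm β) ↔ CupZero Δ α β := by
  simp [← hφ]

variable [Fintype V] [Fintype W]

/-- The number of vertices (including `s`) which are not adjacent to `s`. -/
noncomputable def codegree (Γ : SimpleGraph V) (s : V) : ℕ := Nat.card {x // ¬ Γ.Adj s x}

theorem finrank_fun_not_adj (s : V) :
    finrank F ({x // ¬ Γ.Adj s x} → F) = codegree Γ s := by
  classical
  rw [finrank_fintype_fun_eq_card, codegree, Nat.card_eq_fintype_card]

theorem finrank_annihilator_le {α : V → F} {s : V} (hs : α s ≠ 0) :
    finrank F (annihilator Γ α) ≤ codegree Γ s := by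
  classical
  rw [← finrank_fun_not_adj (F := F)]
  exact LinearMap.finrank_le_finrank_of_injective (restrict_injective hs)

/-- If `α` attains the bound of `finrank_annihilator_le` at `s`, then no vertex of its support is
adjacent to a vertex outside the closed neighbourhood of `s`. -/
theorem apply_eq_zero_of_finrank_eq {α : V → F} {s x y : V} (hs : α s ≠ 0)
    (h : finrank F (annihilator Γ α) = codegree Γ s) (hxs : x ≠ s) (hx : ¬ Γ.Adj s x)
    (hxy : Γ.Adj x y) : α y = 0 := by
  classical
  rw [← finrank_fun_not_adj (F := F)] at h
  obtain ⟨⟨δ, hδ⟩, hδx⟩ := (LinearMap.injective_iff_surjective_of_finrank_eq_finrank h).mp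
    (restrict_injective hs) (Pi.single ⟨x, hx⟩ 1)
  have hval : ∀ z (hz : ¬ Γ.Adj s z),
      δ z = (Pi.single ⟨x, hx⟩ 1 : {x // ¬ Γ.Adj s x} → F) ⟨z, hz⟩ :=
    fun z hz => congrFun hδx ⟨z, hz⟩
  have hδ1 : δ x = 1 := by rw [hval x hx, Pi.single_eq_same]
  have hδ0 : ∀ z, z ≠ x → ¬ Γ.Adj s z → δ z = 0 := fun z hzx hz => by
    rw [hval z hz, Pi.single_eq_of_ne]
    simpa using hzx
  have hδy : δ y = 0 := by
    by_cases hy : Γ.Adj s y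
    · have := hδ s y hy
      rw [hδ0 s hxs.symm (Γ.loopless.irrefl s), mul_zero] at this
      exact (mul_eq_zero.mp this).resolve_left hs
    · exact hδ0 y hxy.ne' hy
  have := hδ x y hxy
  rwa [hδ1, hδy, mul_zero, mul_one, eq_comm] at this

theorem finrank_annihilator_single [DecidableEq V] (s : V) :
    finrank F (annihilator Γ (Pi.single s (1 : F))) = codegree Γ s := by
  classical
  rw [← finrank_fun_not_adj (F := F)]
  refine LinearEquiv.finrank_eq (LinearEquiv.ofBijective (restrict Γ _ s)
    ⟨restrict_injective (by simp), fun g => ?_⟩)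
  refine ⟨⟨fun x => if hx : Γ.Adj s x then 0 else g ⟨x, hx⟩, ?_⟩, ?_⟩
  · rw [mem_annihilator, cupZero_single_iff]
    intro x hx
    simp [hx]
  · ext ⟨x, hx⟩
    simp [restrict_apply, hx]

theorem codegree_le_of_apply_single_ne_zero [DecidableEq V]
    (hφ : ∀ α β, CupZero Δ (φ α) (φ β) ↔ CupZero Γ α β) {v : V} {w : W}
    (h : φ (Pi.single v 1) w ≠ 0) : codegree Γ v ≤ codegree Δ w := by
  rw [← finrank_annihilator_single (F := F), ← finrank_annihilator_map hφ]
  exact finrank_annihilator_le h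

/-- If all vertices in the support of `φ α` have codegree more than `k`, then so do those in the
support of `α`. -/
theorem lt_codegree_of_apply_ne_zero
    (hφ : ∀ α β, CupZero Δ (φ α) (φ β) ↔ CupZero Γ α β) {α : V → F} {k : ℕ}
    (h : ∀ w, φ α w ≠ 0 → k < codegree Δ w) {v : V} (hv : α v ≠ 0) : k < codegree Γ v := by
  classical
  have hsum : α = ∑ w, φ α w • φ.symm (Pi.single w 1) := by
    apply φ.injective
    simp only [map_sum, map_smul, LinearEquiv.apply_symm_apply]
    exact pi_eq_sum_univ' (φ α)
  rw [hsum, Finset.sum_apply] at hv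
  obtain ⟨w, -, hw⟩ := Finset.exists_ne_zero_of_sum_ne_zero hv
  rw [Pi.smul_apply, smul_eq_mul] at hw
  exact (h w (left_ne_zero_of_mul hw)).trans_le
    (codegree_le_of_apply_single_ne_zero (cupZero_symm_iff hφ) (right_ne_zero_of_mul hw))

/-- An invertible matrix has a transversal with nonzero entries. -/
theorem exists_equiv_apply_single_ne_zero [DecidableEq V] (φ : (V → F) ≃ₗ[F] (W → F)) :
    ∃ σ : V ≃ W, ∀ v, φ (Pi.single v 1) (σ v) ≠ 0 := by
  classical
  have hcard : Fintype.card V = Fintype.card W := by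
    simpa using φ.finrank_eq
  let e : V ≃ W := Fintype.equivOfCardEq hcard
  let ψ : (V → F) ≃ₗ[F] (V → F) := φ.trans (LinearEquiv.funCongrLeft F F e)
  have hdet : (LinearMap.toMatrix' (ψ : (V → F) →ₗ[F] (V → F))).det ≠ 0 := by
    rw [LinearMap.det_toMatrix']
    exact (LinearEquiv.isUnit_det' ψ).ne_zero
  rw [Matrix.det_apply] at hdet
  obtain ⟨τ, -, hτ⟩ := Finset.exists_ne_zero_of_sum_ne_zero hdet
  refine ⟨τ.trans e, fun v hv => hτ ?_⟩
  rw [Finset.prod_eq_zero (Finset.mem_univ v), smul_zero]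
  simpa [LinearMap.toMatrix'_apply, ψ, LinearEquiv.funCongrLeft, LinearMap.funLeft] using hv

theorem sum_codegree_le (hφ : ∀ α β, CupZero Δ (φ α) (φ β) ↔ CupZero Γ α β) :
    ∑ v, codegree Γ v ≤ ∑ w, codegree Δ w := by
  classical
  obtain ⟨σ, hσ⟩ := exists_equiv_apply_single_ne_zero φ
  rw [← Equiv.sum_comp σ]
  exact Finset.sum_le_sum fun v _ => codegree_le_of_apply_single_ne_zero hφ (hσ v)

theorem codegree_eq [DecidableEq V] (hφ : ∀ α β, CupZero Δ (φ α) (φ β) ↔ CupZero Γ α β)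
    {σ : V ≃ W} (hσ : ∀ v, φ (Pi.single v 1) (σ v) ≠ 0) (v : V) :
    codegree Δ (σ v) = codegree Γ v := by
  have hle : ∀ v ∈ Finset.univ, codegree Γ v ≤ codegree Δ (σ v) := fun v _ =>
    codegree_le_of_apply_single_ne_zero hφ (hσ v)
  have hsum : ∑ v, codegree Γ v = ∑ v, codegree Δ (σ v) := by
    rw [Equiv.sum_comp σ]
    exact le_antisymm (sum_codegree_le hφ) (sum_codegree_le (cupZero_symm_iff hφ))
  exact ((Finset.sum_eq_sum_iff_of_le hle).mp hsum v (Finset.mem_univ v)).symm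

/-- Suppose `α` and `β` have zero cup product and `s` is adjacent to a vertex of the support of `α`.
Then `α` and `β` are proportional on `s` and any vertex of the support of `α` at which the bound of
`finrank_annihilator_le` is attained. -/
theorem mul_eq_mul_of_finrank_eq {α β : V → F} (hαβ : CupZero Γ α β) {s t x : V}
    (hst : Γ.Adj s t) (ht : α t ≠ 0) (hx : α x ≠ 0)
    (h : finrank F (annihilator Γ α) = codegree Γ x) : α s * β x = α x * β s := by
  by_cases hxs : s = x
  · rw [hxs]
  · by_cases hadj : Γ.Adj x s
    · exact (hαβ x s hadj).symm
    · exact absurd (apply_eq_zero_of_finrank_eq hx h hxs hadj hst) ht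

theorem adj_of_adj_map [DecidableEq V] (hφ : ∀ α β, CupZero Δ (φ α) (φ β) ↔ CupZero Γ α β)
    {σ : V ≃ W} (hσ : ∀ v, φ (Pi.single v 1) (σ v) ≠ 0) {v w : V}
    (hadj : Δ.Adj (σ v) (σ w)) : Γ.Adj v w := by
  by_contra hvw
  have hne : v ≠ w := fun h => hadj.ne (congrArg σ h)
  set α := φ (Pi.single v 1) with hα
  set β := φ (Pi.single w 1) with hβ
  have hαβ : CupZero Δ α β := by
    rw [hα, hβ, hφ, cupZero_single_iff]
    rintro x hx
    exact Pi.single_eq_of_ne (by rintro rfl; exact hvw hx) _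
  have hprod : α (σ w) * β (σ v) ≠ 0 := by
    rw [← hαβ _ _ hadj]
    exact mul_ne_zero (hσ v) (hσ w)
  have hαw := left_ne_zero_of_mul hprod
  have hβv := right_ne_zero_of_mul hprod
  have hcod : codegree Γ v = codegree Γ w := by
    apply le_antisymm
    · rw [← codegree_eq hφ hσ w]
      exact codegree_le_of_apply_single_ne_zero hφ hαw
    · rw [← codegree_eq hφ hσ v]
      exact codegree_le_of_apply_single_ne_zero hφ hβv
  have hrα : finrank F (annihilator Δ α) = codegree Γ v := by
    rw [hα, finrank_annihilator_map hφ, finrank_annihilator_single]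
  have hrβ : finrank F (annihilator Δ β) = codegree Γ v := by
    rw [hβ, finrank_annihilator_map hφ, finrank_annihilator_single, hcod]
  let γ : V → F := α (σ v) • Pi.single w 1 - β (σ v) • Pi.single v 1
  have hφγ : ∀ x, φ γ x = α (σ v) * β x - α x * β (σ v) := fun x => by
    simp [γ, hα, hβ, mul_comm]
  have hγv : γ v ≠ 0 := by simpa [γ, Pi.single_eq_of_ne hne] using hβv
  refine lt_irrefl _ (lt_codegree_of_apply_ne_zero hφ (k := codegree Γ v) (fun x hx => ?_) hγv)
  rw [hφγ, sub_ne_zero] at hx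
  have hsupp : α x ≠ 0 ∨ β x ≠ 0 := by
    by_contra! h
    simp [h.1, h.2] at hx
  rcases hsupp with h | h
  · refine lt_of_le_of_ne (codegree_le_of_apply_single_ne_zero hφ h) fun heq => hx ?_
    exact mul_eq_mul_of_finrank_eq hαβ hadj hαw h (hrα.trans heq)
  · refine lt_of_le_of_ne (hcod.trans_le (codegree_le_of_apply_single_ne_zero hφ h))
      fun heq => hx ?_
    have := mul_eq_mul_of_finrank_eq hαβ.symm hadj (hσ w) h (hrβ.trans heq)
    linear_combination -this

theorem nonempty_iso_of_cupZero_iff (hφ : ∀ α β, CupZero Δ (φ α) (φ β) ↔ CupZero Γ α β) :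
    Nonempty (Γ ≃g Δ) := by
  classical
  obtain ⟨σ, hσ⟩ := exists_equiv_apply_single_ne_zero φ
  refine ⟨⟨σ, fun {v w} => ⟨adj_of_adj_map hφ hσ, fun hvw => ?_⟩⟩⟩
  let f : {x // ¬ Γ.Adj v x} → {y // ¬ Δ.Adj (σ v) y} :=
    fun x => ⟨σ x, fun h => x.2 (adj_of_adj_map hφ hσ h)⟩
  have hf : Function.Injective f := fun x y hxy =>
    Subtype.ext (σ.injective (congrArg Subtype.val hxy))
  have hsurj := ((Nat.bijective_iff_injective_and_card f).mpr ⟨hf, (codegree_eq hφ hσ v).symm⟩).2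
  by_contra h
  obtain ⟨x, hx⟩ := hsurj ⟨σ w, h⟩
  have : (x : V) = w := σ.injective (congrArg Subtype.val hx)
  exact x.2 (this ▸ hvw)

end LinearRigidity

end RAAG

/-- Rigidity of right-angled Artin groups (Droms): `A(Γ) ≅ A(Δ)` as groups if and
only if `Γ ≅ Δ` as graphs. -/
theorem raag_rigidity {V W : Type*} [Fintype V] [Fintype W]
    (Γ : SimpleGraph V) (Δ : SimpleGraph W) :
    Nonempty (PresentedGroup (raagRels Γ) ≃* PresentedGroup (raagRels Δ)) ↔
      Nonempty (Γ ≃g Δ) := by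
  constructor
  · rintro ⟨e⟩
    exact RAAG.nonempty_iso_of_cupZero_iff (RAAG.cupZero_pullbackEquiv_iff (F := ℚ) e)
  · rintro ⟨e⟩
    exact ⟨RAAG.congr e⟩
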